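/- Let x : ℝ → ℝ² be a C^∞, λ-periodic curve parametrized by affine arc length with affine curvature k (the affine curvature of a strictly convex closed curve). Define the symplectic-billiard Mather coefficients β₅ := −(λ⁴/120)·∫₀^λ k(s) ds and β₇ := −(9λ⁶/25200)·∫₀^λ k(s)² ds + (λ⁵/1800)·(∫₀^λ k(s) ds)². Then 42·λ³·β₇ ≤ 120·β₅², with equality if and only if k is constant on ℝ (equivalently, the curve is an ellipse). -/

import Mathlib

open Filter
open scoped Topology

/-- The standard area form on the plane: `ω(u,v) = u₁v₂ − u₂v₁`. -/
noncomputable def om (u v : ℝ × ℝ) : ℝ := u.1 * v.2 - u.2 * v.1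

/-!
The combination `120 β₅² - 42 λ³ β₇` equals `(3/200) λ⁸ (λ ∫ k² - (∫ k)²)`. The bracket is `λ` times
the integral of the squared deviation of `k` from its mean over a period, so it is nonnegative and
vanishes exactly when `k` is constant.
-/

section CauchySchwarz

open MeasureTheory

variable {f : ℝ → ℝ} {a b : ℝ}

lemma sub_smul_interval_average {E : Type*} [NormedAddCommGroup E] [NormedSpace ℝ E]
    (f : ℝ → E) (a b : ℝ) : (b - a) • ⨍ t in a..b, f t = ∫ t in a..b, f t := by
  rcases eq_or_ne a b with rfl | hab
  · rw [sub_self, zero_smul, intervalIntegral.integral_same]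
  · rw [interval_average_eq, smul_inv_smul₀ (sub_ne_zero.mpr hab.symm)]

lemma sub_mul_integral_sq_sub_average (hf : IntervalIntegrable f volume a b)
    (hf_sq : IntervalIntegrable (fun t => f t ^ 2) volume a b) :
    (b - a) * ∫ t in a..b, (f t - ⨍ u in a..b, f u) ^ 2 =
      (b - a) * (∫ t in a..b, f t ^ 2) - (∫ t in a..b, f t) ^ 2 := by
  set m := ⨍ u in a..b, f u
  have hmean : (b - a) * m = ∫ t in a..b, f t := sub_smul_interval_average f a b
  have hlin : IntervalIntegrable (fun t => 2 * m * f t) volume a b :=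
    hf.const_mul (2 * m)
  calc (b - a) * ∫ t in a..b, (f t - m) ^ 2
      = (b - a) * ∫ t in a..b, (f t ^ 2 - 2 * m * f t + m ^ 2) := by
        simp only [sub_sq, mul_right_comm]
    _ = (b - a) * ((∫ t in a..b, f t ^ 2) - 2 * m * (∫ t in a..b, f t) + (b - a) * m ^ 2) := by
        rw [intervalIntegral.integral_add (hf_sq.sub hlin) intervalIntegrable_const,
          intervalIntegral.integral_sub hf_sq hlin, intervalIntegral.integral_const_mul,
          intervalIntegral.integral_const, smul_eq_mul]
    _ = (b - a) * (∫ t in a..b, f t ^ 2) - (∫ t in a..b, f t) ^ 2 := by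
        rw [← hmean]
        ring

lemma sq_integral_le_sub_mul_integral_sq (hab : a ≤ b)
    (hf : IntervalIntegrable f volume a b)
    (hf_sq : IntervalIntegrable (fun t => f t ^ 2) volume a b) :
    (∫ t in a..b, f t) ^ 2 ≤ (b - a) * ∫ t in a..b, f t ^ 2 := by
  rw [← sub_nonneg, ← sub_mul_integral_sq_sub_average hf hf_sq]
  exact mul_nonneg (sub_nonneg.mpr hab)
    (intervalIntegral.integral_nonneg hab fun t _ => sq_nonneg _)

lemma integral_eq_zero_iff_of_continuousOn_of_nonneg (hab : a < b)
    (hf : ContinuousOn f (Set.Icc a b)) (hf_nonneg : ∀ t ∈ Set.Icc a b, 0 ≤ f t) :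
    ∫ t in a..b, f t = 0 ↔ ∀ t ∈ Set.Icc a b, f t = 0 := by
  constructor
  · intro hzero
    by_contra! ⟨t, ht, hne⟩
    exact (intervalIntegral.integral_pos hab hf
      (fun u hu => hf_nonneg u (Set.Ioc_subset_Icc_self hu))
      ⟨t, ht, (hf_nonneg t ht).lt_of_ne' hne⟩).ne' hzero
  · intro hf_zero
    rw [← Set.uIcc_of_le hab.le] at hf_zero
    rw [intervalIntegral.integral_congr hf_zero, intervalIntegral.integral_zero]

lemma sq_integral_eq_sub_mul_integral_sq_iff (hab : a < b) (hf : ContinuousOn f (Set.Icc a b)) :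
    (∫ t in a..b, f t) ^ 2 = (b - a) * ∫ t in a..b, f t ^ 2 ↔
      ∃ c, ∀ t ∈ Set.Icc a b, f t = c := by
  constructor
  · intro heq
    have hvar := sub_mul_integral_sq_sub_average (hf.intervalIntegrable_of_Icc hab.le)
      ((hf.pow 2).intervalIntegrable_of_Icc hab.le)
    have hdev : ∫ t in a..b, (f t - ⨍ u in a..b, f u) ^ 2 = 0 := by
      rwa [heq, sub_self, mul_eq_zero_iff_left (sub_pos.mpr hab).ne'] at hvar
    have hdev_zero := (integral_eq_zero_iff_of_continuousOn_of_nonneg hab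
      ((hf.sub continuousOn_const).pow 2) fun t _ => sq_nonneg _).mp hdev
    exact ⟨_, fun t ht => sub_eq_zero.mp (sq_eq_zero_iff.mp (hdev_zero t ht))⟩
  · rintro ⟨c, hc⟩
    have hconst : ∀ t ∈ Set.uIcc a b, f t = c := by rwa [Set.uIcc_of_le hab.le]
    rw [intervalIntegral.integral_congr hconst,
      intervalIntegral.integral_congr fun t ht => congrArg (· ^ 2) (hconst t ht)]
    simp only [intervalIntegral.integral_const, smul_eq_mul]
    ring

end CauchySchwarz

lemma exists_forall_mem_Icc_eq_iff_of_periodic {G α : Type*} [AddCommGroup G] [LinearOrder G]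
    [IsOrderedAddMonoid G] [Archimedean G] {f : G → α} {T : G} (hf : Function.Periodic f T)
    (hT : 0 < T) : (∃ c, ∀ t ∈ Set.Icc 0 T, f t = c) ↔ ∃ c, ∀ t, f t = c := by
  refine exists_congr fun c => ⟨fun h s => ?_, fun h t _ => h t⟩
  obtain ⟨t, ht, hst⟩ := hf.exists_mem_Ico₀ hT s
  exact hst.trans (h t (Set.Ico_subset_Icc_self ht))

lemma periodic_iteratedDeriv {𝕜 E : Type*} [NontriviallyNormedField 𝕜] [NormedAddCommGroup E]
    [NormedSpace 𝕜 E] {f : 𝕜 → E} {T : 𝕜} (hf : Function.Periodic f T) (n : ℕ) :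
    Function.Periodic (iteratedDeriv n f) T := fun s => by
  have h := congrFun (iteratedDeriv_comp_add_const n f T) s
  rw [hf.funext] at h
  exact h.symm

lemma continuous_om : Continuous (Function.uncurry om) := by
  unfold om Function.uncurry
  fun_prop

/-- The affine curvature `ω(x'', x''')` of a plane curve `x` parametrized by affine arc length,
as a function of the parameter. -/
noncomputable def affineCurvature (x : ℝ → ℝ × ℝ) (s : ℝ) : ℝ :=
  om (iteratedDeriv 2 x s) (iteratedDeriv 3 x s)

namespace affineCurvature

variable {x : ℝ → ℝ × ℝ}

lemma continuous (hx : ContDiff ℝ 3 x) : Continuous (affineCurvature x) :=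
  continuous_om.comp₂ (hx.continuous_iteratedDeriv 2 (by norm_num))
    (hx.continuous_iteratedDeriv 3 le_rfl)

lemma periodic {T : ℝ} (hx : Function.Periodic x T) : Function.Periodic (affineCurvature x) T :=
  fun s => congrArg₂ om (periodic_iteratedDeriv hx 2 s) (periodic_iteratedDeriv hx 3 s)

end affineCurvature

theorem stmt_15_general {lam : ℝ} (hlam : 0 < lam) {k : ℝ → ℝ} (hk : Continuous k)
    (hper : Function.Periodic k lam) {β₅ β₇ : ℝ}
    (hβ₅ : β₅ = -(lam ^ 4 / 120) * ∫ t in (0 : ℝ)..lam, k t)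
    (hβ₇ : β₇ = -(9 * lam ^ 6 / 25200) * (∫ t in (0 : ℝ)..lam, (k t) ^ 2) +
      lam ^ 5 / 1800 * (∫ t in (0 : ℝ)..lam, k t) ^ 2) :
    42 * lam ^ 3 * β₇ ≤ 120 * β₅ ^ 2 ∧
      (42 * lam ^ 3 * β₇ = 120 * β₅ ^ 2 ↔ ∃ c : ℝ, ∀ s : ℝ, k s = c) := by
  have hpos : 0 < 3 / 200 * lam ^ 8 := by positivity
  have hgap : 120 * β₅ ^ 2 - 42 * lam ^ 3 * β₇ = 3 / 200 * lam ^ 8 *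
      ((lam - 0) * (∫ t in (0 : ℝ)..lam, k t ^ 2) - (∫ t in (0 : ℝ)..lam, k t) ^ 2) := by
    rw [hβ₅, hβ₇]
    ring
  constructor
  · rw [← sub_nonneg, hgap, mul_nonneg_iff_of_pos_left hpos, sub_nonneg]
    exact sq_integral_le_sub_mul_integral_sq hlam.le (hk.intervalIntegrable 0 lam)
      ((hk.pow 2).intervalIntegrable 0 lam)
  · rw [← exists_forall_mem_Icc_eq_iff_of_periodic hper hlam,
      ← sq_integral_eq_sub_mul_integral_sq_iff hlam hk.continuousOn, eq_comm, ← sub_eq_zero, hgap,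
      mul_eq_zero_iff_left hpos.ne', sub_eq_zero, eq_comm]

theorem stmt_15 (x : ℝ → ℝ × ℝ) (lam : ℝ) (hlam : 0 < lam) (hx : ContDiff ℝ (⊤ : ℕ∞) x)
    (haff : ∀ s : ℝ, om (deriv x s) (iteratedDeriv 2 x s) = 1)
    (hper : ∀ s : ℝ, x (s + lam) = x s)
    (k : ℝ → ℝ) (hk : ∀ s : ℝ, k s = om (iteratedDeriv 2 x s) (iteratedDeriv 3 x s))
    -- the symplectic-billiard Mather coefficients
    (β₅ β₇ : ℝ)
    (hβ₅ : β₅ = -(lam ^ 4 / 120) * ∫ t in (0:ℝ)..lam, k t)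
    (hβ₇ : β₇ = -(9 * lam ^ 6 / 25200) * (∫ t in (0:ℝ)..lam, (k t) ^ 2) +
      lam ^ 5 / 1800 * (∫ t in (0:ℝ)..lam, k t) ^ 2) :
    42 * lam ^ 3 * β₇ ≤ 120 * β₅ ^ 2 ∧
      (42 * lam ^ 3 * β₇ = 120 * β₅ ^ 2 ↔ ∃ c : ℝ, ∀ s : ℝ, k s = c) := by
  obtain rfl : k = affineCurvature x := funext hk
  exact stmt_15_general hlam (affineCurvature.continuous (contDiff_infty.mp hx 3))
    (affineCurvature.periodic hper) hβ₅ hβ₇
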